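/- arXiv:2101.06912 — 3 statements merged into one kernel-verified Lean document; each statement's English description precedes it below -/
import Mathlib

section
/- Let R_1, …, R_n (n ≥ 2) be a side-attachment sequence of axis-parallel rectangles. Then the maximal internal line segments of the rectangular tiling (R_1,…,R_n) of U_n = R_1 ∪ ⋯ ∪ R_n are exactly the segments R_j ∩ U_{j-1} for 2 ≤ j ≤ n, where U_{j-1} = R_1 ∪ ⋯ ∪ R_{j-1}. -/
/-!
Write `U_j` for the union of the first rectangles up to `R_j`. Since `U_j = U_{j-1} ∪ R_j` with
disjoint interiors, the three rectangles are related by a cut: there are a linear form `f` (plus or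
minus a coordinate) and `b` with `U_{j-1} = U_j ∩ {f ≤ b}` and `R_j = U_j ∩ {f ≥ b}`
(`exists_cut`). So `s_j := R_j ∩ U_{j-1}` is a segment; it lies in the frontier of `R_j`, avoids the
interior of `U_{j-1}`, and its relative interior lies in the interior of `U_j`. In particular `s_j`
is an internal segment.

Every internal segment is contained in some `s_j` (`exists_subset_insertion_seg`), by induction on
the number of rectangles: let `O` be its relative interior, contained in the interior of `U_k` and
in the union of the frontiers. No point of `O` has `f > b`, as it would be interior to `R_k` and
outside the other rectangles. As `O` can be prolonged a little beyond each of its points, either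
`f = b` on `O`, so `O ⊆ s_k`, or `f < b` on `O`, and the induction hypothesis applies
(`Cut.dichotomy`).

Finally `s_j ⊆ s_k` forces `j = k`: each relative interior point of `s_j` is also one of `s_k`,
hence is interior to both `U_j` and `U_k`, while it is interior neither to `U_{j-1}` nor to
`U_{k-1}`. The two facts together give that the maximal internal segments are exactly the `s_j`.
-/

open Set

/-- An axis-parallel rectangle `[x1,x2] × [y1,y2]` with `x1 < x2` and `y1 < y2`. -/
structure Rect where
  x1 : ℝ
  x2 : ℝ
  y1 : ℝ
  y2 : ℝ
  hx : x1 < x2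
  hy : y1 < y2

namespace Rect

/-- The rectangle as a subset of the plane. -/
def toSet (R : Rect) : Set (ℝ × ℝ) := Set.Icc R.x1 R.x2 ×ˢ Set.Icc R.y1 R.y2

/-- The area of the rectangle. -/
noncomputable def area (R : Rect) : ℝ := (R.x2 - R.x1) * (R.y2 - R.y1)

end Rect

/-- Vertical closed segment `{x} × [c,d]`. -/
def vseg (x c d : ℝ) : Set (ℝ × ℝ) := ({x} : Set ℝ) ×ˢ Set.Icc c d

/-- Horizontal closed segment `[a,b] × {y}`. -/
def hseg (a b y : ℝ) : Set (ℝ × ℝ) := Set.Icc a b ×ˢ ({y} : Set ℝ)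

/-- Relative interior of a vertical segment. -/
def vsegOpen (x c d : ℝ) : Set (ℝ × ℝ) := ({x} : Set ℝ) ×ˢ Set.Ioo c d

/-- Relative interior of a horizontal segment. -/
def hsegOpen (a b y : ℝ) : Set (ℝ × ℝ) := Set.Ioo a b ×ˢ ({y} : Set ℝ)

/-- `S` is one of the four sides of the rectangle `R`. -/
def Rect.IsSide (R : Rect) (S : Set (ℝ × ℝ)) : Prop :=
  S = vseg R.x1 R.y1 R.y2 ∨ S = vseg R.x2 R.y1 R.y2 ∨
  S = hseg R.x1 R.x2 R.y1 ∨ S = hseg R.x1 R.x2 R.y2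

/-- A rectangular tiling: a finite family of axis-parallel rectangles with pairwise
disjoint interiors whose union is an axis-parallel rectangle `F`. -/
structure Tiling (I : Type*) [Fintype I] where
  R : I → Rect
  F : Rect
  disj : Pairwise fun i j => interior ((R i).toSet) ∩ interior ((R j).toSet) = ∅
  union : (⋃ i, (R i).toSet) = F.toSet

variable {I : Type*} [Fintype I]

/-- An internal line segment of a tiling: a horizontal or vertical closed segment of
positive length contained in the union of the boundaries of the rectangles, whose
relative interior lies in the topological interior of the bounding rectangle. -/
def IsInternalSeg (T : Tiling I) (S : Set (ℝ × ℝ)) : Prop :=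
  (∃ x c d : ℝ, c < d ∧ S = vseg x c d ∧
      S ⊆ (⋃ i, frontier ((T.R i).toSet)) ∧ vsegOpen x c d ⊆ interior T.F.toSet) ∨
  (∃ a b y : ℝ, a < b ∧ S = hseg a b y ∧
      S ⊆ (⋃ i, frontier ((T.R i).toSet)) ∧ hsegOpen a b y ⊆ interior T.F.toSet)

/-- A maximal internal line segment: an internal segment not properly contained in
any other internal segment. -/
def IsMaxInternalSeg (T : Tiling I) (S : Set (ℝ × ℝ)) : Prop :=
  IsInternalSeg T S ∧ ∀ S', IsInternalSeg T S' → S ⊆ S' → S' = S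

/-- `A ∩ B` is a vertical segment of positive length with `A` lying to the left of `B`. -/
def LeftAdj (A B : Rect) : Prop :=
  A.x2 = B.x1 ∧ ∃ c d : ℝ, c < d ∧ A.toSet ∩ B.toSet = vseg A.x2 c d

/-- `A ∩ B` is a horizontal segment of positive length with `A` lying below `B`. -/
def BelowAdj (A B : Rect) : Prop :=
  A.y2 = B.y1 ∧ ∃ a b : ℝ, a < b ∧ A.toSet ∩ B.toSet = hseg a b A.y2

/-- `A` meets the left side of `F` in a segment of positive length. -/
def MeetsLeftSide (A F : Rect) : Prop :=
  ∃ c d : ℝ, c < d ∧ A.toSet ∩ vseg F.x1 F.y1 F.y2 = vseg F.x1 c d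

/-- `A` meets the right side of `F` in a segment of positive length. -/
def MeetsRightSide (A F : Rect) : Prop :=
  ∃ c d : ℝ, c < d ∧ A.toSet ∩ vseg F.x2 F.y1 F.y2 = vseg F.x2 c d

/-- `A` meets the bottom side of `F` in a segment of positive length. -/
def MeetsBottomSide (A F : Rect) : Prop :=
  ∃ a b : ℝ, a < b ∧ A.toSet ∩ hseg F.x1 F.x2 F.y1 = hseg a b F.y1

/-- `A` meets the top side of `F` in a segment of positive length. -/
def MeetsTopSide (A F : Rect) : Prop :=
  ∃ a b : ℝ, a < b ∧ A.toSet ∩ hseg F.x1 F.x2 F.y2 = hseg a b F.y2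

/-- Two tilings indexed by the same finite set are weakly equivalent. -/
def WeakEquiv (T T' : Tiling I) : Prop :=
  (∀ i j : I, LeftAdj (T.R i) (T.R j) ↔ LeftAdj (T'.R i) (T'.R j)) ∧
  (∀ i j : I, BelowAdj (T.R i) (T.R j) ↔ BelowAdj (T'.R i) (T'.R j)) ∧
  (∀ i : I, MeetsLeftSide (T.R i) T.F ↔ MeetsLeftSide (T'.R i) T'.F) ∧
  (∀ i : I, MeetsRightSide (T.R i) T.F ↔ MeetsRightSide (T'.R i) T'.F) ∧
  (∀ i : I, MeetsTopSide (T.R i) T.F ↔ MeetsTopSide (T'.R i) T'.F) ∧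
  (∀ i : I, MeetsBottomSide (T.R i) T.F ↔ MeetsBottomSide (T'.R i) T'.F)

/-- A tiling is area-universal if every assignment of positive areas to the rectangles
is realized by a weakly equivalent tiling. -/
def AreaUniversal (T : Tiling I) : Prop :=
  ∀ w : I → ℝ, (∀ i, 0 < w i) → ∃ T' : Tiling I, WeakEquiv T T' ∧ ∀ i, (T'.R i).area = w i

/-- A tiling is generic if no point belongs to four or more of the rectangles. -/
def Generic (T : Tiling I) : Prop :=
  ∀ p : ℝ × ℝ, ∀ s : Finset I, (∀ i ∈ s, p ∈ (T.R i).toSet) → s.card ≤ 3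

/-- A side-attachment sequence: rectangles with pairwise disjoint interiors such that
every partial union `U_j = R_0 ∪ ⋯ ∪ R_j` is an axis-parallel rectangle. -/
def SideAttachSeq {n : ℕ} (R : Fin n → Rect) : Prop :=
  (Pairwise fun i j => interior ((R i).toSet) ∩ interior ((R j).toSet) = ∅) ∧
  ∀ j : Fin n, ∃ U : Rect, (⋃ i ∈ Set.Iic j, (R i).toSet) = U.toSet

/-! ### Segments -/

/-- `S` is a closed axis-parallel segment of positive length with relative interior `O`. -/
def IsSeg (S O : Set (ℝ × ℝ)) : Prop :=
  (∃ x c d : ℝ, c < d ∧ S = vseg x c d ∧ O = vsegOpen x c d) ∨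
  (∃ a b y : ℝ, a < b ∧ S = hseg a b y ∧ O = hsegOpen a b y)

lemma isInternalSeg_iff {I : Type*} [Fintype I] (T : Tiling I) (S : Set (ℝ × ℝ)) :
    IsInternalSeg T S ↔ ∃ O, IsSeg S O ∧ S ⊆ (⋃ i, frontier ((T.R i).toSet)) ∧
      O ⊆ interior T.F.toSet := by
  constructor
  · rintro (⟨x, c, d, h, h1, h2, h3⟩ | ⟨x, c, d, h, h1, h2, h3⟩)
    · exact ⟨_, Or.inl ⟨x, c, d, h, h1, rfl⟩, h2, h3⟩
    · exact ⟨_, Or.inr ⟨x, c, d, h, h1, rfl⟩, h2, h3⟩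
  · rintro ⟨O, (⟨x, c, d, h, h1, rfl⟩ | ⟨x, c, d, h, h1, rfl⟩), h2, h3⟩
    · exact Or.inl ⟨x, c, d, h, h1, h2, h3⟩
    · exact Or.inr ⟨x, c, d, h, h1, h2, h3⟩

lemma IsSeg.nonempty {S O : Set (ℝ × ℝ)} (h : IsSeg S O) : O.Nonempty := by
  rcases h with ⟨x, c, d, h, -, rfl⟩ | ⟨a, b, y, h, -, rfl⟩
  · exact ⟨(x, (c + d) / 2), by simp only [vsegOpen, mem_prod, mem_singleton_iff, mem_Ioo]
                                refine ⟨trivial, ?_, ?_⟩ <;> linarith⟩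
  · exact ⟨((a + b) / 2, y), by simp only [hsegOpen, mem_prod, mem_singleton_iff, mem_Ioo]
                                refine ⟨⟨?_, ?_⟩, trivial⟩ <;> linarith⟩

lemma IsSeg.open_subset {S O : Set (ℝ × ℝ)} (h : IsSeg S O) : O ⊆ S := by
  rcases h with ⟨x, c, d, h, rfl, rfl⟩ | ⟨a, b, y, h, rfl, rfl⟩
  · exact prod_mono subset_rfl Ioo_subset_Icc_self
  · exact prod_mono Ioo_subset_Icc_self subset_rfl

lemma IsSeg.subset_closure {S O : Set (ℝ × ℝ)} (h : IsSeg S O) : S ⊆ closure O := by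
  rcases h with ⟨x, c, d, h, rfl, rfl⟩ | ⟨a, b, y, h, rfl, rfl⟩
  · simp only [vseg, vsegOpen, closure_prod_eq, closure_Ioo h.ne, closure_singleton, subset_rfl]
  · simp only [hseg, hsegOpen, closure_prod_eq, closure_Ioo h.ne, closure_singleton, subset_rfl]

/-- The only property of open segments used in `Cut.dichotomy`: they extend past each point. -/
lemma exists_extend_Ioo {c d p q : ℝ} (hp : p ∈ Ioo c d) :
    ∃ t : ℝ, 0 < t ∧ p + t * (p - q) ∈ Ioo c d := by
  have hcont : ContinuousAt (fun t : ℝ => p + t * (p - q)) 0 := by fun_prop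
  have h1 : ∀ᶠ t in nhds (0 : ℝ), p + t * (p - q) ∈ Ioo c d :=
    hcont.eventually_mem (by simpa using Ioo_mem_nhds hp.1 hp.2)
  have h2 : ∀ᶠ t in nhdsWithin (0 : ℝ) (Ioi 0), p + t * (p - q) ∈ Ioo c d :=
    h1.filter_mono nhdsWithin_le_nhds
  obtain ⟨t, ht, ht'⟩ := (h2.and self_mem_nhdsWithin).exists
  exact ⟨t, ht', ht⟩

lemma IsSeg.exists_extend {S O : Set (ℝ × ℝ)} (h : IsSeg S O) {p q : ℝ × ℝ}
    (hp : p ∈ O) (hq : q ∈ O) : ∃ t : ℝ, 0 < t ∧ p + t • (p - q) ∈ O := by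
  obtain ⟨p1, p2⟩ := p
  obtain ⟨q1, q2⟩ := q
  rcases h with ⟨x, c, d, h, -, rfl⟩ | ⟨a, b, y, h, -, rfl⟩
  · obtain ⟨rfl, hp⟩ := hp
    obtain ⟨rfl, hq⟩ := hq
    obtain ⟨t, ht, h'⟩ := exists_extend_Ioo (q := q2) hp
    exact ⟨t, ht, by simp, h'⟩
  · obtain ⟨hp, rfl⟩ := hp
    obtain ⟨hq, rfl⟩ := hq
    obtain ⟨t, ht, h'⟩ := exists_extend_Ioo (q := q1) hp
    exact ⟨t, ht, h', by simp⟩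

lemma IsSeg.open_subset_open {S O S' O' : Set (ℝ × ℝ)} (h : IsSeg S O) (h' : IsSeg S' O')
    (hs : S ⊆ S') : O ⊆ O' := by
  rcases h with ⟨x, c, d, h, rfl, rfl⟩ | ⟨a, b, y, h, rfl, rfl⟩ <;>
  rcases h' with ⟨x', c', d', h', rfl, rfl⟩ | ⟨a', b', y', h', rfl, rfl⟩
  · have h1 : (x, c) ∈ vseg x' c' d' := hs ⟨rfl, le_rfl, h.le⟩
    have h2 : (x, d) ∈ vseg x' c' d' := hs ⟨rfl, h.le, le_rfl⟩
    exact prod_mono (by simpa using h1.1) (Ioo_subset_Ioo h1.2.1 h2.2.2)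
  · have h1 : (x, c) ∈ hseg a' b' y' := hs ⟨rfl, le_rfl, h.le⟩
    have h2 : (x, d) ∈ hseg a' b' y' := hs ⟨rfl, h.le, le_rfl⟩
    exact absurd (h1.2.trans h2.2.symm) h.ne
  · have h1 : (a, y) ∈ vseg x' c' d' := hs ⟨⟨le_rfl, h.le⟩, rfl⟩
    have h2 : (b, y) ∈ vseg x' c' d' := hs ⟨⟨h.le, le_rfl⟩, rfl⟩
    exact absurd (h1.1.trans h2.1.symm) h.ne
  · have h1 : (a, y) ∈ hseg a' b' y' := hs ⟨⟨le_rfl, h.le⟩, rfl⟩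
    have h2 : (b, y) ∈ hseg a' b' y' := hs ⟨⟨h.le, le_rfl⟩, rfl⟩
    exact prod_mono (Ioo_subset_Ioo h1.1.1 h2.1.2) (by simpa using h1.2)

/-! ### Rectangles -/

lemma Rect.interior_toSet (R : Rect) :
    interior R.toSet = Ioo R.x1 R.x2 ×ˢ Ioo R.y1 R.y2 := by
  rw [Rect.toSet, interior_prod_eq, interior_Icc, interior_Icc]

lemma Rect.mem_toSet (R : Rect) (x y : ℝ) :
    (x, y) ∈ R.toSet ↔ (R.x1 ≤ x ∧ x ≤ R.x2) ∧ R.y1 ≤ y ∧ y ≤ R.y2 := Iff.rfl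

lemma Rect.isClosed_toSet (R : Rect) : IsClosed R.toSet := isClosed_Icc.prod isClosed_Icc

lemma Rect.subset_closure_interior (R : Rect) : R.toSet ⊆ closure (interior R.toSet) := by
  rw [R.interior_toSet, closure_prod_eq, closure_Ioo R.hx.ne, closure_Ioo R.hy.ne, Rect.toSet]

lemma Rect.disjoint_of_interior {A : Set (ℝ × ℝ)} {R : Rect}
    (h : interior A ∩ interior R.toSet = ∅) : interior A ∩ R.toSet = ∅ := by
  by_contra hne
  obtain ⟨p, hp, hpR⟩ := nonempty_iff_ne_empty.mpr hne
  obtain ⟨q, hq⟩ := mem_closure_iff.mp (R.subset_closure_interior hpR) _ isOpen_interior hp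
  exact (h ▸ hq : q ∈ (∅ : Set (ℝ × ℝ)))

/-! ### Cuts of a rectangle into two rectangles -/

/-- `W` is cut by a line into `V` and `R`, which meet in an axis-parallel segment whose relative
interior is interior to `W`. -/
def Cut (V R W : Set (ℝ × ℝ)) : Prop :=
  (∃ (f : (ℝ × ℝ) →L[ℝ] ℝ) (b : ℝ), V = W ∩ {p | f p ≤ b} ∧ R = W ∩ {p | b ≤ f p}) ∧
  ∃ O, IsSeg (R ∩ V) O ∧ O ⊆ interior W

lemma Cut.symm {V R W : Set (ℝ × ℝ)} (h : Cut V R W) : Cut R V W := by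
  obtain ⟨⟨f, b, hV, hR⟩, hO⟩ := h
  refine ⟨⟨-f, -b, ?_, ?_⟩, by rwa [inter_comm]⟩
  · simpa using hR
  · simpa using hV

lemma cut_of_x2_le {V R W : Rect} (hW : V.toSet ∪ R.toSet = W.toSet) (h : V.x2 ≤ R.x1) :
    Cut V.toSet R.toSet W.toSet := by
  have key : ∀ x y, ((V.x1 ≤ x ∧ x ≤ V.x2) ∧ V.y1 ≤ y ∧ y ≤ V.y2) ∨
      ((R.x1 ≤ x ∧ x ≤ R.x2) ∧ R.y1 ≤ y ∧ y ≤ R.y2) ↔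
      ((W.x1 ≤ x ∧ x ≤ W.x2) ∧ W.y1 ≤ y ∧ y ≤ W.y2) := fun x y => by
    simpa only [mem_union, Rect.mem_toSet] using Set.ext_iff.mp hW (x, y)
  have hVx := V.hx
  have hVy := V.hy
  have hRx := R.hx
  have hRy := R.hy
  have hWx := W.hx
  have hWy := W.hy
  -- the corners of `V` and `R` lie in `W`
  have v1 := (key V.x1 V.y1).1 (by grind)
  have v2 := (key V.x2 V.y2).1 (by grind)
  have r1 := (key R.x1 R.y1).1 (by grind)
  have r2 := (key R.x2 R.y2).1 (by grind)
  -- the left corners of `W` lie in `V`, the right ones in `R`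
  have w1 := (key W.x1 W.y1).2 (by grind)
  have w2 := (key W.x1 W.y2).2 (by grind)
  have w3 := (key W.x2 W.y1).2 (by grind)
  have w4 := (key W.x2 W.y2).2 (by grind)
  -- there is no gap between `V` and `R`
  have m := (key ((V.x2 + R.x1) / 2) W.y1).2 (by grind)
  have e1 : V.x1 = W.x1 := by grind
  have e2 : V.y1 = W.y1 := by grind
  have e3 : V.y2 = W.y2 := by grind
  have e4 : R.x2 = W.x2 := by grind
  have e5 : R.y1 = W.y1 := by grind
  have e6 : R.y2 = W.y2 := by grind
  have e7 : R.x1 = V.x2 := by grind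
  refine ⟨⟨ContinuousLinearMap.fst ℝ ℝ ℝ, V.x2, ?_, ?_⟩, vsegOpen V.x2 W.y1 W.y2,
    Or.inl ⟨V.x2, W.y1, W.y2, hWy, ?_, rfl⟩, ?_⟩
  · ext ⟨x, y⟩
    simp only [mem_inter_iff, Rect.mem_toSet, mem_ofPred_eq, ContinuousLinearMap.coe_fst']
    grind
  · ext ⟨x, y⟩
    simp only [mem_inter_iff, Rect.mem_toSet, mem_ofPred_eq, ContinuousLinearMap.coe_fst']
    grind
  · ext ⟨x, y⟩
    simp only [mem_inter_iff, Rect.mem_toSet, vseg, mem_prod, mem_singleton_iff, mem_Icc]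
    grind
  · rw [W.interior_toSet]
    rintro ⟨x, y⟩ ⟨hx, hy⟩
    obtain rfl : x = V.x2 := hx
    exact ⟨⟨by grind, by grind⟩, hy⟩

lemma cut_of_y2_le {V R W : Rect} (hW : V.toSet ∪ R.toSet = W.toSet) (h : V.y2 ≤ R.y1) :
    Cut V.toSet R.toSet W.toSet := by
  have key : ∀ x y, ((V.x1 ≤ x ∧ x ≤ V.x2) ∧ V.y1 ≤ y ∧ y ≤ V.y2) ∨
      ((R.x1 ≤ x ∧ x ≤ R.x2) ∧ R.y1 ≤ y ∧ y ≤ R.y2) ↔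
      ((W.x1 ≤ x ∧ x ≤ W.x2) ∧ W.y1 ≤ y ∧ y ≤ W.y2) := fun x y => by
    simpa only [mem_union, Rect.mem_toSet] using Set.ext_iff.mp hW (x, y)
  have hVx := V.hx
  have hVy := V.hy
  have hRx := R.hx
  have hRy := R.hy
  have hWx := W.hx
  have hWy := W.hy
  -- the corners of `V` and `R` lie in `W`
  have v1 := (key V.x1 V.y1).1 (by grind)
  have v2 := (key V.x2 V.y2).1 (by grind)
  have r1 := (key R.x1 R.y1).1 (by grind)
  have r2 := (key R.x2 R.y2).1 (by grind)
  -- the lower corners of `W` lie in `V`, the upper ones in `R`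
  have w1 := (key W.x1 W.y1).2 (by grind)
  have w2 := (key W.x1 W.y2).2 (by grind)
  have w3 := (key W.x2 W.y1).2 (by grind)
  have w4 := (key W.x2 W.y2).2 (by grind)
  -- there is no gap between `V` and `R`
  have m := (key W.x1 ((V.y2 + R.y1) / 2)).2 (by grind)
  have e1 : V.x1 = W.x1 := by grind
  have e2 : V.x2 = W.x2 := by grind
  have e3 : V.y1 = W.y1 := by grind
  have e4 : R.x1 = W.x1 := by grind
  have e5 : R.x2 = W.x2 := by grind
  have e6 : R.y2 = W.y2 := by grind
  have e7 : R.y1 = V.y2 := by grind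
  refine ⟨⟨ContinuousLinearMap.snd ℝ ℝ ℝ, V.y2, ?_, ?_⟩, hsegOpen W.x1 W.x2 V.y2,
    Or.inr ⟨W.x1, W.x2, V.y2, hWx, ?_, rfl⟩, ?_⟩
  · ext ⟨x, y⟩
    simp only [mem_inter_iff, Rect.mem_toSet, mem_ofPred_eq, ContinuousLinearMap.coe_snd']
    grind
  · ext ⟨x, y⟩
    simp only [mem_inter_iff, Rect.mem_toSet, mem_ofPred_eq, ContinuousLinearMap.coe_snd']
    grind
  · ext ⟨x, y⟩
    simp only [mem_inter_iff, Rect.mem_toSet, hseg, mem_prod, mem_singleton_iff, mem_Icc]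
    grind
  · rw [W.interior_toSet]
    rintro ⟨x, y⟩ ⟨hx, hy⟩
    obtain rfl : y = V.y2 := hy
    exact ⟨hx, ⟨by grind, by grind⟩⟩

lemma exists_cut {V R W : Rect} (hW : V.toSet ∪ R.toSet = W.toSet)
    (hd : interior V.toSet ∩ interior R.toSet = ∅) : Cut V.toSet R.toSet W.toSet := by
  have hor : V.x2 ≤ R.x1 ∨ R.x2 ≤ V.x1 ∨ V.y2 ≤ R.y1 ∨ R.y2 ≤ V.y1 := by
    rw [V.interior_toSet, R.interior_toSet, prod_inter_prod, prod_eq_empty_iff,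
      Ioo_inter_Ioo, Ioo_inter_Ioo, Ioo_eq_empty_iff, Ioo_eq_empty_iff] at hd
    have hVx := V.hx
    have hVy := V.hy
    have hRx := R.hx
    have hRy := R.hy
    simp only [lt_inf_iff, sup_lt_iff] at hd
    grind
  have hW' := (union_comm _ _).trans hW
  rcases hor with h | h | h | h
  · exact cut_of_x2_le hW h
  · exact (cut_of_x2_le hW' h).symm
  · exact cut_of_y2_le hW h
  · exact (cut_of_y2_le hW' h).symm

/-- The induction step: an open segment inside `W` that runs along the frontier of `R` and along a
subset `B` of `V` either lies on the cut or avoids `R` altogether. -/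
lemma Cut.dichotomy {V R W B S O : Set (ℝ × ℝ)} (h : Cut V R W) (hO : IsSeg S O)
    (hW : O ⊆ interior W) (hBV : B ⊆ V) (hB : O ⊆ B ∪ frontier R) (hR : IsClosed R) :
    O ⊆ R ∩ V ∨ (O ⊆ interior V ∧ O ⊆ B) := by
  obtain ⟨⟨f, b, rfl, rfl⟩, -⟩ := h
  have hle : ∀ p ∈ O, f p ≤ b := by
    intro p hp
    by_contra! hlt
    rcases hB hp with h1 | h1
    · exact absurd (hBV h1).2 (not_le.mpr hlt)
    · refine h1.2 (interior_maximal (s := W ∩ {p | b ≤ f p}) (t := interior W ∩ {p | b < f p})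
        ?_ ?_ ⟨hW hp, hlt⟩)
      · exact fun q hq => ⟨interior_subset hq.1, (show b ≤ f q from le_of_lt hq.2)⟩
      · exact isOpen_interior.inter (isOpen_lt continuous_const f.continuous)
  by_cases hex : ∃ p ∈ O, f p = b
  · left
    obtain ⟨p, hp, hpb⟩ := hex
    intro q hq
    have hqW := interior_subset (hW hq)
    have hqb : b ≤ f q := by
      -- otherwise prolonging the segment from `q` through `p` reaches a point with `f > b`
      by_contra! hlt
      obtain ⟨t, ht, htO⟩ := hO.exists_extend hp hq
      have h1 := hle _ htO
      simp only [map_add, map_smul, map_sub, smul_eq_mul, hpb] at h1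
      nlinarith [mul_pos ht (sub_pos.mpr hlt)]
    exact ⟨⟨hqW, hqb⟩, hqW, hle q hq⟩
  · right
    push Not at hex
    have hlt : ∀ p ∈ O, f p < b := fun p hp => lt_of_le_of_ne (hle p hp) (hex p hp)
    refine ⟨fun p hp => ?_, fun p hp => ?_⟩
    · refine interior_maximal (t := interior W ∩ {p | f p < b}) ?_ ?_ ⟨hW hp, hlt p hp⟩
      · exact fun q hq => ⟨interior_subset hq.1, (show f q ≤ b from le_of_lt hq.2)⟩
      · exact isOpen_interior.inter (isOpen_lt f.continuous continuous_const)
    · rcases hB hp with h1 | h1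
      · exact h1
      · exact absurd (hR.frontier_subset h1).2 (not_le.mpr (hlt p hp))

/-! ### Side-attachment sequences -/

/-- The union `R_0 ∪ ⋯ ∪ R_j` of an initial part of a sequence of rectangles. -/
def initUnion {n : ℕ} (R : Fin n → Rect) (j : Fin n) : Set (ℝ × ℝ) :=
  ⋃ i ∈ Set.Iic j, (R i).toSet

/-- The segment `R_j ∩ (R_0 ∪ ⋯ ∪ R_{j-1})` along which `R_j` is attached. -/
def insSeg {n : ℕ} (R : Fin n → Rect) (j : Fin n) : Set (ℝ × ℝ) :=
  (R j).toSet ∩ ⋃ i ∈ Set.Iio j, (R i).toSet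

lemma initUnion_mono {n : ℕ} (R : Fin n → Rect) {i j : Fin n} (h : i ≤ j) :
    initUnion R i ⊆ initUnion R j :=
  biUnion_subset_biUnion_left (Iic_subset_Iic.mpr h)

lemma Iio_eq_Iic_pred {n k : ℕ} (hk : k + 1 < n) :
    Iio (⟨k + 1, hk⟩ : Fin n) = Iic ⟨k, by omega⟩ := by
  ext i
  simp only [mem_Iio, mem_Iic, Fin.lt_def, Fin.le_def]
  omega

lemma Iic_succ_eq {n k : ℕ} (hk : k + 1 < n) :
    Iic (⟨k + 1, hk⟩ : Fin n) = insert ⟨k + 1, hk⟩ (Iic ⟨k, by omega⟩) := by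
  ext i
  simp only [mem_insert_iff, mem_Iic, Fin.le_def, Fin.ext_iff]
  omega

lemma insSeg_succ {n k : ℕ} (R : Fin n → Rect) (hk : k + 1 < n) :
    insSeg R ⟨k + 1, hk⟩ = (R ⟨k + 1, hk⟩).toSet ∩ initUnion R ⟨k, by omega⟩ := by
  rw [insSeg, Iio_eq_Iic_pred, initUnion]

lemma initUnion_succ {n k : ℕ} (R : Fin n → Rect) (hk : k + 1 < n) :
    initUnion R ⟨k + 1, hk⟩ = initUnion R ⟨k, by omega⟩ ∪ (R ⟨k + 1, hk⟩).toSet := by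
  rw [initUnion, Iic_succ_eq, biUnion_insert, union_comm, initUnion]

lemma SideAttachSeq.interior_disjoint {n k : ℕ} {R : Fin n → Rect} (h : SideAttachSeq R)
    (hk : k + 1 < n) :
    interior (R ⟨k + 1, hk⟩).toSet ∩ initUnion R ⟨k, by omega⟩ = ∅ := by
  simp only [initUnion, inter_iUnion, iUnion_eq_empty]
  intro i hi
  refine Rect.disjoint_of_interior (h.1 ?_)
  rintro rfl
  simp [Fin.le_def] at hi

lemma SideAttachSeq.cut {n k : ℕ} {R : Fin n → Rect} (h : SideAttachSeq R) (hk : k + 1 < n) :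
    Cut (initUnion R ⟨k, by omega⟩) (R ⟨k + 1, hk⟩).toSet (initUnion R ⟨k + 1, hk⟩) := by
  obtain ⟨V, hV⟩ := h.2 ⟨k, by omega⟩
  obtain ⟨W, hW⟩ := h.2 ⟨k + 1, hk⟩
  change initUnion R _ = _ at hV hW
  have hs := initUnion_succ R hk
  have hd := h.interior_disjoint hk
  rw [hV] at hd hs
  rw [hV, hW]
  refine exists_cut (hs.symm.trans hW) ?_
  rw [inter_comm]
  exact subset_empty_iff.mp (hd ▸ inter_subset_inter_right _ interior_subset)

/-- The attaching segment avoids the interior of the rectangle it is attached to. -/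
lemma SideAttachSeq.insSeg_inter_interior {n k : ℕ} {R : Fin n → Rect} (h : SideAttachSeq R)
    (hk : k + 1 < n) :
    interior (initUnion R ⟨k, by omega⟩) ∩ insSeg R ⟨k + 1, hk⟩ = ∅ := by
  have hd : interior (initUnion R ⟨k, by omega⟩) ∩ (R ⟨k + 1, hk⟩).toSet = ∅ := by
    refine Rect.disjoint_of_interior ?_
    rw [inter_comm]
    exact subset_empty_iff.mp
      (h.interior_disjoint hk ▸ inter_subset_inter_right _ interior_subset)
  exact subset_empty_iff.mp (hd ▸ inter_subset_inter_right _ inter_subset_left)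

lemma SideAttachSeq.exists_open {n k : ℕ} {R : Fin n → Rect} (h : SideAttachSeq R)
    (hk : k + 1 < n) :
    ∃ O, IsSeg (insSeg R ⟨k + 1, hk⟩) O ∧ O ⊆ interior (initUnion R ⟨k + 1, hk⟩) := by
  rw [insSeg_succ]
  exact (h.cut hk).2

lemma SideAttachSeq.insSeg_subset_frontier {n k : ℕ} {R : Fin n → Rect} (h : SideAttachSeq R)
    (hk : k + 1 < n) : insSeg R ⟨k + 1, hk⟩ ⊆ frontier (R ⟨k + 1, hk⟩).toSet := by
  rw [insSeg_succ]
  rintro p ⟨hp, hp'⟩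
  refine ⟨subset_closure hp, fun hi => ?_⟩
  exact (h.interior_disjoint hk ▸ ⟨hi, hp'⟩ : p ∈ (∅ : Set (ℝ × ℝ)))

/-- If `s_j ⊆ s_k` then `j = k`, since a relative interior point of `s_j` is
interior to both `U_j` and `U_k`, but to neither `U_{j-1}` nor `U_{k-1}`. -/
lemma SideAttachSeq.eq_of_insSeg_subset {n j k : ℕ} {R : Fin n → Rect} (h : SideAttachSeq R)
    (hj : j + 1 < n) (hk : k + 1 < n)
    (hs : insSeg R ⟨j + 1, hj⟩ ⊆ insSeg R ⟨k + 1, hk⟩) : j = k := by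
  obtain ⟨O, hO, hOi⟩ := h.exists_open hj
  obtain ⟨O', hO', hOi'⟩ := h.exists_open hk
  obtain ⟨p, hp⟩ := hO.nonempty
  have hpj := hO.open_subset hp
  have hp' := hO.open_subset_open hO' hs hp
  rcases lt_trichotomy j k with hlt | heq | hlt
  · have := interior_mono (initUnion_mono R
      (show (⟨j + 1, hj⟩ : Fin n) ≤ ⟨k, by omega⟩ from Fin.le_def.mpr hlt)) (hOi hp)
    exact (h.insSeg_inter_interior hk ▸ ⟨this, hs hpj⟩ : p ∈ (∅ : Set (ℝ × ℝ))).elim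
  · exact heq
  · have := interior_mono (initUnion_mono R
      (show (⟨k + 1, hk⟩ : Fin n) ≤ ⟨j, by omega⟩ from Fin.le_def.mpr hlt)) (hOi' hp')
    exact (h.insSeg_inter_interior hj ▸ ⟨this, hpj⟩ : p ∈ (∅ : Set (ℝ × ℝ))).elim

lemma SideAttachSeq.exists_subset_insSeg {n : ℕ} {R : Fin n → Rect} (h : SideAttachSeq R)
    {S O : Set (ℝ × ℝ)} (hO : IsSeg S O) (k : ℕ) (hk : k < n)
    (hi : O ⊆ interior (initUnion R ⟨k, hk⟩))
    (hf : O ⊆ ⋃ i ∈ Iic (⟨k, hk⟩ : Fin n), frontier (R i).toSet) :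
    ∃ (j : ℕ) (hj : j + 1 < n), O ⊆ insSeg R ⟨j + 1, hj⟩ := by
  induction k with
  | zero =>
    obtain ⟨p, hp⟩ := hO.nonempty
    have h0 : Iic (⟨0, hk⟩ : Fin n) = {⟨0, hk⟩} := by
      ext i
      simp only [mem_Iic, mem_singleton_iff, Fin.le_def, Fin.ext_iff]
      omega
    have h1 := hi hp
    have h2 := hf hp
    rw [initUnion, h0, biUnion_singleton] at h1
    rw [h0, biUnion_singleton] at h2
    exact absurd h1 h2.2
  | succ k ih =>
    rw [Iic_succ_eq, biUnion_insert, union_comm] at hf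
    have hBV : (⋃ i ∈ Iic (⟨k, by omega⟩ : Fin n), frontier (R i).toSet) ⊆
        initUnion R ⟨k, by omega⟩ :=
      iUnion₂_mono fun i _ => (R i).isClosed_toSet.frontier_subset
    rcases (h.cut hk).dichotomy hO hi hBV hf (Rect.isClosed_toSet _) with h1 | ⟨h1, h2⟩
    · exact ⟨k, hk, by rwa [insSeg_succ]⟩
    · exact ih (by omega) h1 h2

lemma initUnion_last {m : ℕ} (T : Tiling (Fin (m + 1))) :
    initUnion T.R ⟨m, by omega⟩ = T.F.toSet := by
  rw [← T.union, initUnion]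
  refine iUnion_congr fun i => ?_
  simp [Fin.le_def, Nat.le_of_lt_succ i.isLt]

lemma exists_subset_insertion_seg {n : ℕ} (T : Tiling (Fin n)) (h : SideAttachSeq T.R)
    {S : Set (ℝ × ℝ)} (hS : IsInternalSeg T S) :
    ∃ (j : ℕ) (hj : j + 1 < n), S ⊆ insSeg T.R ⟨j + 1, hj⟩ := by
  obtain ⟨O, hO, hf, hi⟩ := (isInternalSeg_iff T S).mp hS
  obtain ⟨p, hp⟩ := hO.nonempty
  obtain ⟨i0, -⟩ := mem_iUnion.mp (hf (hO.open_subset hp))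
  obtain ⟨m, rfl⟩ : ∃ m, n = m + 1 := ⟨n - 1, by have := i0.isLt; omega⟩
  have hf' : O ⊆ ⋃ i ∈ Iic (⟨m, by omega⟩ : Fin (m + 1)), frontier (T.R i).toSet := by
    intro q hq
    obtain ⟨i, hqi⟩ := mem_iUnion.mp (hf (hO.open_subset hq))
    exact mem_iUnion₂.mpr ⟨i, Fin.le_def.mpr (Nat.le_of_lt_succ i.isLt), hqi⟩
  obtain ⟨j, hj, hOj⟩ := h.exists_subset_insSeg hO m (by omega)
    (by rwa [initUnion_last]) hf'
  refine ⟨j, hj, hO.subset_closure.trans (closure_minimal hOj ?_)⟩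
  obtain ⟨U, hU⟩ := h.2 ⟨j, by omega⟩
  change initUnion T.R _ = _ at hU
  rw [insSeg_succ, hU]
  exact (Rect.isClosed_toSet _).inter U.isClosed_toSet

lemma isInternalSeg_insSeg {n k : ℕ} (T : Tiling (Fin n)) (h : SideAttachSeq T.R)
    (hk : k + 1 < n) : IsInternalSeg T (insSeg T.R ⟨k + 1, hk⟩) := by
  obtain ⟨O, hO, hi⟩ := h.exists_open hk
  refine (isInternalSeg_iff T _).mpr ⟨O, hO, ?_, hi.trans (interior_mono ?_)⟩
  · exact (h.insSeg_subset_frontier hk).trans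
      (subset_iUnion (fun i => frontier (T.R i).toSet) _)
  · rw [← T.union]
    exact iUnion₂_subset fun i _ => subset_iUnion (fun i => (T.R i).toSet) i

/-- For a side-attachment sequence with `n ≥ 2`, the maximal internal
line segments of the resulting tiling are exactly the segments `R_j ∩ U_{j-1}` for
`2 ≤ j ≤ n` (0-based: `1 ≤ (j : ℕ)`). -/
theorem sideAttachSeq_maxSegs_eq_insertion_segs
    {n : ℕ} (hn : 2 ≤ n) (T : Tiling (Fin n)) (h : SideAttachSeq T.R)
    (S : Set (ℝ × ℝ)) :
    IsMaxInternalSeg T S ↔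
      ∃ j : Fin n, 1 ≤ (j : ℕ) ∧
        S = (T.R j).toSet ∩ ⋃ i ∈ Set.Iio j, (T.R i).toSet := by
  constructor
  · rintro ⟨hS, hmax⟩
    obtain ⟨k, hk, hsub⟩ := exists_subset_insertion_seg T h hS
    exact ⟨⟨k + 1, hk⟩, Nat.le_add_left 1 k, (hmax _ (isInternalSeg_insSeg T h hk) hsub).symm⟩
  · rintro ⟨⟨j, hj⟩, hj1, hS⟩
    obtain ⟨k, rfl⟩ : ∃ k, j = k + 1 := ⟨j - 1, by simp only at hj1; omega⟩
    change S = insSeg T.R ⟨k + 1, hj⟩ at hS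
    subst hS
    refine ⟨isInternalSeg_insSeg T h hj, fun S' hS' hsub => ?_⟩
    obtain ⟨l, hl, hsub'⟩ := exists_subset_insertion_seg T h hS'
    obtain rfl := h.eq_of_insSeg_subset hj hl (hsub.trans hsub')
    exact hsub'.antisymm hsub
end

section
/- Let R_1, …, R_n be a side-attachment sequence of axis-parallel rectangles. Then every point p ∈ ℝ² belongs to at most three of the rectangles R_j. In particular the rectangular tiling (R_1,…,R_n) of U_n = R_1 ∪ ⋯ ∪ R_n is generic: it has only 3-joints, i.e., no point belongs to four or more of the rectangles. -/
/-!
Suppose four of the rectangles, `A`, `B`, `C`, `D` in order of attachment, contain `p`, and let `U`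
be the rectangle covered by the sequence up to and including `C`. If `p` lay on a side of `U`, then
`A`, `B`, `C`, which all lie in `U`, would be three non-overlapping rectangles at `p` on the same
side of a line through `p`; there is room for only two (`Rect.not_three_on_one_side_x`,
`Rect.not_three_on_one_side_y`). So `p` is interior to `U`, and since `p ∈ D`, some point `q` lies
in the interiors of both `U` and `D`. But `q` belongs to a rectangle attached no later than `C`,
and that rectangle then overlaps `D`, a contradiction. Genericity is the same assertion.
-/

open Set

variable {I : Type*} [Fintype I]

namespace Rect

theorem mem_toSet_s7 (R : Rect) (p : ℝ × ℝ) :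
    p ∈ R.toSet ↔ (R.x1 ≤ p.1 ∧ p.1 ≤ R.x2) ∧ (R.y1 ≤ p.2 ∧ p.2 ≤ R.y2) := Iff.rfl

/-- Two rectangles are separated if a horizontal or vertical line has them on different sides. -/
def Sep (A B : Rect) : Prop :=
  A.x2 ≤ B.x1 ∨ B.x2 ≤ A.x1 ∨ A.y2 ≤ B.y1 ∨ B.y2 ≤ A.y1

theorem sep_of_interior_inter_eq_empty {A B : Rect}
    (h : interior A.toSet ∩ interior B.toSet = ∅) : Sep A B := by
  by_contra hs
  simp only [Sep, not_or, not_le] at hs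
  obtain ⟨h1, h2, h3, h4⟩ := hs
  obtain ⟨u, hu1, hu2⟩ := exists_between
    (show max A.x1 B.x1 < min A.x2 B.x2 from max_lt (lt_min A.hx h2) (lt_min h1 B.hx))
  obtain ⟨v, hv1, hv2⟩ := exists_between
    (show max A.y1 B.y1 < min A.y2 B.y2 from max_lt (lt_min A.hy h4) (lt_min h3 B.hy))
  rw [max_lt_iff] at hu1 hv1
  rw [lt_min_iff] at hu2 hv2
  have hm : (u, v) ∈ interior A.toSet ∩ interior B.toSet := by
    simp only [toSet, interior_prod_eq, interior_Icc]
    exact ⟨⟨⟨hu1.1, hu2.1⟩, ⟨hv1.1, hv2.1⟩⟩, ⟨⟨hu1.2, hu2.2⟩, ⟨hv1.2, hv2.2⟩⟩⟩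
  rw [h] at hm
  exact hm

/-- Three separated rectangles containing `p` cannot all lie to the left, or all to the right, of
the vertical line through `p`: two of them would both reach above `p`, or both below it. -/
theorem not_three_on_one_side_x {A B C : Rect} {p : ℝ × ℝ}
    (hA : p ∈ A.toSet) (hB : p ∈ B.toSet) (hC : p ∈ C.toSet)
    (hAB : Sep A B) (hAC : Sep A C) (hBC : Sep B C) :
    ¬ (A.x2 ≤ p.1 ∧ B.x2 ≤ p.1 ∧ C.x2 ≤ p.1) ∧
    ¬ (p.1 ≤ A.x1 ∧ p.1 ≤ B.x1 ∧ p.1 ≤ C.x1) := by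
  rw [mem_toSet_s7] at hA hB hC
  have a1 := A.hx; have a2 := A.hy
  have b1 := B.hx; have b2 := B.hy
  have c1 := C.hx; have c2 := C.hy
  simp only [Sep] at hAB hAC hBC
  constructor <;> rintro ⟨h1, h2, h3⟩ <;>
  rcases hAB with h | h | h | h <;> try linarith
  all_goals rcases hAC with h' | h' | h' | h' <;> try linarith
  all_goals rcases hBC with h'' | h'' | h'' | h'' <;> linarith

/-- The analogue of `not_three_on_one_side_x` for the horizontal line through `p`. -/
theorem not_three_on_one_side_y {A B C : Rect} {p : ℝ × ℝ}
    (hA : p ∈ A.toSet) (hB : p ∈ B.toSet) (hC : p ∈ C.toSet)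
    (hAB : Sep A B) (hAC : Sep A C) (hBC : Sep B C) :
    ¬ (A.y2 ≤ p.2 ∧ B.y2 ≤ p.2 ∧ C.y2 ≤ p.2) ∧
    ¬ (p.2 ≤ A.y1 ∧ p.2 ≤ B.y1 ∧ p.2 ≤ C.y1) := by
  rw [mem_toSet_s7] at hA hB hC
  have a1 := A.hx; have a2 := A.hy
  have b1 := B.hx; have b2 := B.hy
  have c1 := C.hx; have c2 := C.hy
  simp only [Sep] at hAB hAC hBC
  constructor <;> rintro ⟨h1, h2, h3⟩ <;>
  rcases hAB with h | h | h | h <;> try linarith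
  all_goals rcases hAC with h' | h' | h' | h' <;> try linarith
  all_goals rcases hBC with h'' | h'' | h'' | h'' <;> linarith

theorem bounds_of_subset {A U : Rect} (h : A.toSet ⊆ U.toSet) :
    (U.x1 ≤ A.x1 ∧ A.x2 ≤ U.x2) ∧ (U.y1 ≤ A.y1 ∧ A.y2 ≤ U.y2) := by
  have hl := (mem_toSet_s7 U _).1 (h ((mem_toSet_s7 A (A.x1, A.y1)).2
    ⟨⟨le_rfl, A.hx.le⟩, ⟨le_rfl, A.hy.le⟩⟩))
  have hr := (mem_toSet_s7 U _).1 (h ((mem_toSet_s7 A (A.x2, A.y2)).2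
    ⟨⟨A.hx.le, le_rfl⟩, ⟨A.hy.le, le_rfl⟩⟩))
  exact ⟨⟨hl.1.1, hr.1.2⟩, ⟨hl.2.1, hr.2.2⟩⟩

end Rect

open Rect in
theorem SideAttachSeq.card_le_three {n : ℕ} {R : Fin n → Rect} (h : SideAttachSeq R)
    (p : ℝ × ℝ) (s : Finset (Fin n)) (hs : ∀ i ∈ s, p ∈ (R i).toSet) : s.card ≤ 3 := by
  by_contra! hcard
  obtain ⟨t, hts, ht⟩ := Finset.exists_subset_card_eq (show 4 ≤ s.card from hcard)
  have hp : ∀ k, p ∈ (R (t.orderEmbOfFin ht k)).toSet := fun k =>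
    hs _ (hts (t.orderEmbOfFin_mem ht k))
  have hlt : ∀ k l : Fin 4, k < l → t.orderEmbOfFin ht k < t.orderEmbOfFin ht l :=
    fun k l hkl => (t.orderEmbOfFin ht).strictMono hkl
  have hsep : ∀ i j, i ≠ j → Sep (R i) (R j) := fun i j hij =>
    sep_of_interior_inter_eq_empty (h.1 hij)
  generalize t.orderEmbOfFin ht = e at hp hlt
  obtain ⟨U, hU⟩ := h.2 (e 2)
  have hsub : ∀ i, i ≤ e 2 → (R i).toSet ⊆ U.toSet := fun i hi => by
    rw [← hU]
    exact Set.subset_biUnion_of_mem (u := fun i => (R i).toSet) hi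
  have s01 := hsep _ _ (hlt 0 1 (by decide)).ne
  have s02 := hsep _ _ (hlt 0 2 (by decide)).ne
  have s12 := hsep _ _ (hlt 1 2 (by decide)).ne
  obtain ⟨nx2, nx1⟩ := not_three_on_one_side_x (hp 0) (hp 1) (hp 2) s01 s02 s12
  obtain ⟨ny2, ny1⟩ := not_three_on_one_side_y (hp 0) (hp 1) (hp 2) s01 s02 s12
  obtain ⟨⟨a1, a2⟩, ⟨a3, a4⟩⟩ := bounds_of_subset (hsub _ (hlt 0 2 (by decide)).le)
  obtain ⟨⟨b1, b2⟩, ⟨b3, b4⟩⟩ := bounds_of_subset (hsub _ (hlt 1 2 (by decide)).le)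
  obtain ⟨⟨c1, c2⟩, ⟨c3, c4⟩⟩ := bounds_of_subset (hsub _ le_rfl)
  have px1 : U.x1 < p.1 := by
    by_contra! hle
    exact nx1 ⟨hle.trans a1, hle.trans b1, hle.trans c1⟩
  have px2 : p.1 < U.x2 := by
    by_contra! hle
    exact nx2 ⟨a2.trans hle, b2.trans hle, c2.trans hle⟩
  have py1 : U.y1 < p.2 := by
    by_contra! hle
    exact ny1 ⟨hle.trans a3, hle.trans b3, hle.trans c3⟩
  have py2 : p.2 < U.y2 := by
    by_contra! hle
    exact ny2 ⟨a4.trans hle, b4.trans hle, c4.trans hle⟩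
  obtain ⟨⟨d1, d2⟩, ⟨d3, d4⟩⟩ := (mem_toSet_s7 _ _).1 (hp 3)
  have dx := (R (e 3)).hx
  have dy := (R (e 3)).hy
  -- `(u, v)` is a common interior point of `U` and the fourth rectangle.
  obtain ⟨u, hu1, hu2⟩ := exists_between
    (show max U.x1 (R (e 3)).x1 < min U.x2 (R (e 3)).x2 from
      max_lt (lt_min U.hx (px1.trans_le d2)) (lt_min (d1.trans_lt px2) dx))
  obtain ⟨v, hv1, hv2⟩ := exists_between
    (show max U.y1 (R (e 3)).y1 < min U.y2 (R (e 3)).y2 from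
      max_lt (lt_min U.hy (py1.trans_le d4)) (lt_min (d3.trans_lt py2) dy))
  rw [max_lt_iff] at hu1 hv1
  rw [lt_min_iff] at hu2 hv2
  have hq : (u, v) ∈ U.toSet :=
    (mem_toSet_s7 _ _).2 ⟨⟨hu1.1.le, hu2.1.le⟩, ⟨hv1.1.le, hv2.1.le⟩⟩
  rw [← hU] at hq
  obtain ⟨i, hi, hqi⟩ := Set.mem_iUnion₂.1 hq
  obtain ⟨⟨i1, i2⟩, ⟨i3, i4⟩⟩ := (mem_toSet_s7 _ _).1 hqi
  have hi3 : i < e 3 := lt_of_le_of_lt hi (hlt 2 3 (by decide))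
  rcases hsep _ _ hi3.ne with hh | hh | hh | hh <;> linarith [hu1.2, hu2.2, hv1.2, hv2.2]

/-- In a side-attachment sequence, every point of the plane belongs to at
most three of the rectangles; in particular any tiling formed by these rectangles is
generic (only 3-joints occur). -/
theorem sideAttachSeq_point_in_at_most_three
    {n : ℕ} (R : Fin n → Rect) (h : SideAttachSeq R) :
    (∀ (p : ℝ × ℝ) (s : Finset (Fin n)), (∀ i ∈ s, p ∈ (R i).toSet) → s.card ≤ 3) ∧
    (∀ T : Tiling (Fin n), T.R = R → Generic T) := by
  refine ⟨h.card_le_three, fun T hT p s hs => h.card_le_three p s ?_⟩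
  rwa [← hT]
end

section
/- Let (R_i)_{i∈I} be a rectangular tiling of a rectangle F with |I| ≥ 2 in which every maximal internal line segment is equal to a side of at least one rectangle R_i. Suppose t ∈ I is such that the union of the remaining rectangles (R_i)_{i∈I∖{t}} is itself an axis-parallel rectangle (equivalently, R_t spans a full side of F). Then (R_i)_{i∈I∖{t}} is a rectangular tiling in which every maximal internal line segment is equal to a side of at least one rectangle R_i with i ≠ t. -/
/-!
Put `A = R_t` and let `U` be the union of the other rectangles, `F = U ∪ A`. Since the interior of
`A` misses the interiors of the other rectangles, it misses `U`; hence `A` misses the interior of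
`U` (`Rect.disjoint_of_interior_disjoint`), and the part of the interior of `F` outside the
interior of `A` lies in `U` (`mem_of_mem_interior_union`).

A maximal internal segment `S` of the smaller tiling is then already maximal in the large one.
Let `S'` be an internal segment of the large tiling containing `S`. Its relative interior lies in
the interior of `F` and on boundaries of tiles, so it avoids the interior of `A` and lies in `U`.
As `S'` meets the interior of `U`, its relative interior lies in the interior of `U`, away from
`A`; so it is covered by boundaries of tiles other than `A`, and by taking closures so is `S'`.
Thus `S'` is internal in the smaller tiling and `S' = S`. By hypothesis `S` is a side of some tile,
which is not `A` because `S` meets the interior of `U`. No case distinction on the position of `A`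
in `F` is needed.
-/

open Set

variable {I : Type*} [Fintype I]

theorem Rect.isClosed_toSet_s8 (A : Rect) : IsClosed A.toSet :=
  isClosed_Icc.prod isClosed_Icc

theorem Rect.interior_toSet_s8 (A : Rect) :
    interior A.toSet = Ioo A.x1 A.x2 ×ˢ Ioo A.y1 A.y2 := by
  rw [Rect.toSet, interior_prod_eq, interior_Icc, interior_Icc]

theorem Rect.closure_interior_toSet (A : Rect) : closure (interior A.toSet) = A.toSet := by
  rw [A.interior_toSet_s8, closure_prod_eq, closure_Ioo A.hx.ne, closure_Ioo A.hy.ne, Rect.toSet]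

theorem Rect.IsSide.subset {A : Rect} {S : Set (ℝ × ℝ)} (h : A.IsSide S) : S ⊆ A.toSet := by
  have hx := A.hx.le
  have hy := A.hy.le
  rcases h with rfl | rfl | rfl | rfl <;>
  · rintro ⟨x, y⟩ hp
    simp only [vseg, hseg, Rect.toSet, mem_prod, mem_singleton_iff, mem_Icc] at hp ⊢
    grind

/-- Disjointness from the interior of a rectangle `A` passes to `A` and the interior of the other
set, because `A` is the closure of its interior. -/
theorem Rect.disjoint_of_interior_disjoint {A : Rect} {V : Set (ℝ × ℝ)}
    (h : Disjoint (interior A.toSet) V) : Disjoint A.toSet (interior V) := by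
  rw [← A.closure_interior_toSet]
  exact (h.mono_right interior_subset).closure_left isOpen_interior

/-- If `F ⊆ U ∪ A` with `U` closed, a point of the interior of `F` outside the interior of `A`
is a limit of points of `F` outside `A`, hence lies in `U`. -/
theorem mem_of_mem_interior_union {F U A : Set (ℝ × ℝ)} (hU : IsClosed U) (h : F ⊆ U ∪ A)
    {p : ℝ × ℝ} (hF : p ∈ interior F) (hA : p ∉ interior A) : p ∈ U := by
  rw [← mem_compl_iff, ← closure_compl] at hA
  rw [← hU.closure_eq]
  refine closure_mono ?_ (isOpen_interior.inter_closure ⟨hF, hA⟩)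
  rintro q ⟨hq, hqA⟩
  exact (h (interior_subset hq)).resolve_right hqA

theorem closure_vsegOpen {x c d : ℝ} (h : c < d) : closure (vsegOpen x c d) = vseg x c d := by
  rw [vsegOpen, vseg, closure_prod_eq, closure_Ioo h.ne, closure_singleton]

theorem closure_hsegOpen {a b y : ℝ} (h : a < b) : closure (hsegOpen a b y) = hseg a b y := by
  rw [hsegOpen, hseg, closure_prod_eq, closure_Ioo h.ne, closure_singleton]

/-- If a segment meets the interior of a rectangle containing its relative interior, then its
relative interior lies in the interior of the rectangle. -/
theorem vsegOpen_subset_interior {U : Rect} {x c d : ℝ} {p : ℝ × ℝ}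
    (hp : p ∈ vseg x c d) (hpU : p ∈ interior U.toSet) (hs : vsegOpen x c d ⊆ U.toSet) :
    vsegOpen x c d ⊆ interior U.toSet := by
  have hx : x ∈ Ioo U.x1 U.x2 := by
    rw [U.interior_toSet_s8] at hpU
    have : p.1 = x := hp.1
    exact this ▸ hpU.1
  have hy : Ioo c d ⊆ Ioo U.y1 U.y2 := by
    rw [← interior_Icc (a := U.y1)]
    exact interior_maximal (fun y hy => (hs (show (x, y) ∈ _ from ⟨rfl, hy⟩)).2) isOpen_Ioo
  rw [U.interior_toSet_s8]
  exact prod_mono (singleton_subset_iff.2 hx) hy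

theorem hsegOpen_subset_interior {U : Rect} {a b y : ℝ} {p : ℝ × ℝ}
    (hp : p ∈ hseg a b y) (hpU : p ∈ interior U.toSet) (hs : hsegOpen a b y ⊆ U.toSet) :
    hsegOpen a b y ⊆ interior U.toSet := by
  have hy : y ∈ Ioo U.y1 U.y2 := by
    rw [U.interior_toSet_s8] at hpU
    have : p.2 = y := hp.2
    exact this ▸ hpU.2
  have hx : Ioo a b ⊆ Ioo U.x1 U.x2 := by
    rw [← interior_Icc (a := U.x1)]
    exact interior_maximal (fun x hx => (hs (show (x, y) ∈ _ from ⟨hx, rfl⟩)).1) isOpen_Ioo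
  rw [U.interior_toSet_s8]
  exact prod_mono hx (singleton_subset_iff.2 hy)

theorem IsInternalSeg.exists_mem_interior {J : Type*} [Fintype J] {T : Tiling J}
    {S : Set (ℝ × ℝ)} (h : IsInternalSeg T S) : ∃ p ∈ S, p ∈ interior T.F.toSet := by
  rcases h with ⟨x, c, d, hcd, rfl, -, hs⟩ | ⟨a, b, y, hab, rfl, -, hs⟩
  · obtain ⟨y, hy⟩ := exists_between hcd
    exact ⟨(x, y), ⟨rfl, hy.1.le, hy.2.le⟩, hs ⟨rfl, hy⟩⟩
  · obtain ⟨x, hx⟩ := exists_between hab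
    exact ⟨(x, y), ⟨⟨hx.1.le, hx.2.le⟩, rfl⟩, hs ⟨hx, rfl⟩⟩

/-- If in a rectangular tiling every maximal internal segment is a side of
some rectangle, and the union of the rectangles other than `R_t` is itself a rectangle,
then the remaining family is a rectangular tiling in which every maximal internal
segment is a side of some remaining rectangle. -/
theorem delete_boundary_rect_preserves_maxSeg_side_property
    {I : Type*} [Fintype I] [DecidableEq I] (T : Tiling I) (hI : 2 ≤ Fintype.card I)
    (hmax : ∀ S : Set (ℝ × ℝ), IsMaxInternalSeg T S → ∃ i : I, (T.R i).IsSide S)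
    (t : I) (U : Rect)
    (hU : (⋃ i ∈ ({t}ᶜ : Set I), (T.R i).toSet) = U.toSet) :
    ∃ T' : Tiling {i : I // i ≠ t},
      (∀ i : {i : I // i ≠ t}, T'.R i = T.R i.val) ∧ T'.F = U ∧
      ∀ S : Set (ℝ × ℝ), IsMaxInternalSeg T' S →
        ∃ i : {i : I // i ≠ t}, (T.R i.val).IsSide S := by
  let T' : Tiling {i : I // i ≠ t} :=
    { R := fun i => T.R i.val
      F := U
      disj := fun i j hij => T.disj (fun h => hij (Subtype.ext h))
      union := by
        rw [← hU]
        ext p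
        simp }
  refine ⟨T', fun _ => rfl, rfl, ?_⟩
  have hintU : Disjoint (interior (T.R t).toSet) U.toSet := by
    rw [← hU]
    simp only [disjoint_iUnion_right]
    intro i hi
    rw [← (T.R i).closure_interior_toSet]
    exact (disjoint_iff_inter_eq_empty.2 (T.disj (Ne.symm hi))).closure_right isOpen_interior
  have hRU : Disjoint (T.R t).toSet (interior U.toSet) := Rect.disjoint_of_interior_disjoint hintU
  have hF : T.F.toSet ⊆ U.toSet ∪ (T.R t).toSet := by
    rw [← T.union, ← hU]
    refine iUnion_subset fun i => ?_
    by_cases h : i = t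
    · subst h
      exact subset_union_right
    · exact (subset_biUnion_of_mem (u := fun i => (T.R i).toSet) (x := i) h).trans
        subset_union_left
  have hUF : U.toSet ⊆ T.F.toSet := by
    rw [← T.union, ← hU]
    exact iUnion₂_subset fun i _ => subset_iUnion (fun i => (T.R i).toSet) i
  -- The interior of `R_t` misses the boundaries of all tiles.
  have hfr : ∀ p ∈ ⋃ i, frontier (T.R i).toSet, p ∉ interior (T.R t).toSet := by
    intro p hp hpt
    obtain ⟨i, hi⟩ := mem_iUnion.1 hp
    by_cases h : i = t
    · subst h
      exact hi.2 hpt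
    · refine disjoint_left.1 hintU hpt ?_
      rw [← hU]
      exact mem_biUnion (x := i) h ((T.R i).isClosed_toSet_s8.frontier_subset hi)
  have hsubU : ∀ s : Set (ℝ × ℝ), s ⊆ ⋃ i, frontier (T.R i).toSet → s ⊆ interior T.F.toSet →
      s ⊆ U.toSet := fun s h1 h2 p hp =>
    mem_of_mem_interior_union U.isClosed_toSet_s8 hF (h2 hp) (hfr p (h1 hp))
  have hcov : ∀ s : Set (ℝ × ℝ), s ⊆ ⋃ i, frontier (T.R i).toSet → s ⊆ interior U.toSet →
      closure s ⊆ ⋃ i, frontier (T'.R i).toSet := by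
    intro s h1 h2
    refine closure_minimal (fun p hp => ?_) (isClosed_iUnion_of_finite fun i => isClosed_frontier)
    obtain ⟨i, hi⟩ := mem_iUnion.1 (h1 hp)
    have hit : i ≠ t := by
      rintro rfl
      exact disjoint_left.1 hRU ((T.R i).isClosed_toSet_s8.frontier_subset hi) (h2 hp)
    exact mem_iUnion.2 ⟨⟨i, hit⟩, hi⟩
  rintro S ⟨hS, hSmax⟩
  obtain ⟨p, hpS, hpU⟩ : ∃ p ∈ S, p ∈ interior U.toSet := hS.exists_mem_interior
  have hfrsub : (⋃ i, frontier (T'.R i).toSet) ⊆ ⋃ i, frontier (T.R i).toSet :=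
    iUnion_subset fun i => subset_iUnion (fun i => frontier (T.R i).toSet) i.val
  have hST : IsInternalSeg T S := by
    rcases hS with ⟨x, c, d, h, e, h1, h2⟩ | ⟨a, b, y, h, e, h1, h2⟩
    · exact Or.inl ⟨x, c, d, h, e, h1.trans hfrsub, h2.trans (interior_mono hUF)⟩
    · exact Or.inr ⟨a, b, y, h, e, h1.trans hfrsub, h2.trans (interior_mono hUF)⟩
  have hSTmax : IsMaxInternalSeg T S := by
    refine ⟨hST, fun S' hS' hSS' => hSmax S' ?_ hSS'⟩
    rcases hS' with ⟨x, c, d, h, rfl, h1, h2⟩ | ⟨a, b, y, h, rfl, h1, h2⟩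
    · have h3 : vsegOpen x c d ⊆ ⋃ i, frontier (T.R i).toSet :=
        (closure_vsegOpen h ▸ subset_closure).trans h1
      have h4 := vsegOpen_subset_interior (hSS' hpS) hpU (hsubU _ h3 h2)
      exact Or.inl ⟨x, c, d, h, rfl, closure_vsegOpen h ▸ hcov _ h3 h4, h4⟩
    · have h3 : hsegOpen a b y ⊆ ⋃ i, frontier (T.R i).toSet :=
        (closure_hsegOpen h ▸ subset_closure).trans h1
      have h4 := hsegOpen_subset_interior (hSS' hpS) hpU (hsubU _ h3 h2)
      exact Or.inr ⟨a, b, y, h, rfl, closure_hsegOpen h ▸ hcov _ h3 h4, h4⟩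
  obtain ⟨i, hi⟩ := hmax S hSTmax
  refine ⟨⟨i, ?_⟩, hi⟩
  rintro rfl
  exact disjoint_left.1 hRU (hi.subset hpS) hpU
end
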